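/- Let Φ be a Young function such that Φ and its conjugate Φ̃ are of class Δ₂, assume ℳ is countably generated modulo μ-null sets, let {T(x)}_{x∈ℝ^N} be an N-dimensional dynamical system on Ω, let (ε_k) ⊆ (0,1] with ε_k → 0, and let (u_k) be a sequence of measurable functions on Q×Ω, extended by 0 to ℝ^N×Ω, with sup_k ‖u_k‖_{Φ,Q×Ω} < ∞, which weakly stochastically 2-scale converges to u₀. Fix r > 0 and let B_r be the open Euclidean ball of ℝ^N centered at the origin with radius r. Define v_k(x,ω) = ∫_{B_r} u_k(x + ε_k²ρ, ω) dρ for (x,ω) ∈ Q×Ω. Then sup_k ‖v_k‖_{Φ,Q×Ω} < ∞ and (v_k) weakly stochastically 2-scale converges to v₀, where v₀(x,ω,y) = ∫_{B_r} u₀(x, ω, y+ρ) dρ. -/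

import Mathlib

open MeasureTheory Filter Topology ENNReal

noncomputable section

/-- Euclidean norm on `Fin N → ℝ`. -/
def enorm2 {N : ℕ} (v : Fin N → ℝ) : ℝ := Real.sqrt (∑ i, v i ^ 2)

/-- `Φ : [0,∞) → [0,∞)` is a Young function: continuous, convex, positive on `(0,∞)`,
with `Φ(t)/t → 0` as `t → 0⁺` and `Φ(t)/t → ∞` as `t → ∞` (so `Φ(0) = 0`). -/
def IsYoung (Φ : ℝ → ℝ) : Prop :=
  ContinuousOn Φ (Set.Ici 0) ∧ ConvexOn ℝ (Set.Ici 0) Φ ∧ Φ 0 = 0 ∧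
    (∀ t : ℝ, 0 < t → 0 < Φ t) ∧ (∀ t : ℝ, 0 ≤ t → 0 ≤ Φ t) ∧
    Tendsto (fun t => Φ t / t) (nhdsWithin 0 (Set.Ioi 0)) (nhds 0) ∧
    Tendsto (fun t => Φ t / t) atTop atTop

/-- The `Δ₂`-condition (at infinity). -/
def Delta2 (Φ : ℝ → ℝ) : Prop :=
  ∃ α : ℝ, 0 < α ∧ ∃ t₀ : ℝ, 0 ≤ t₀ ∧ ∀ t : ℝ, t₀ ≤ t → Φ (2 * t) ≤ α * Φ t

/-- The `Δ'`-condition (at infinity). -/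
def DeltaPrime (Φ : ℝ → ℝ) : Prop :=
  ∃ k : ℝ, 0 < k ∧ ∃ t₀ s₀ : ℝ, 0 ≤ t₀ ∧ 0 ≤ s₀ ∧
    ∀ t s : ℝ, t₀ ≤ t → s₀ ≤ s → Φ (t * s) ≤ k * Φ t * Φ s

/-- The conjugate Young function `Φ̃(t) = sup_{s ≥ 0} (st − Φ(s))`. -/
def conjY (Φ : ℝ → ℝ) (t : ℝ) : ℝ := sSup ((fun s => s * t - Φ s) '' Set.Ici 0)

/-- The Luxemburg norm `‖u‖_{Φ,X} = inf {δ > 0 : ∫_X Φ(|u|/δ) dν ≤ 1}` (`+∞` if no such `δ`). -/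
def luxNorm {X : Type*} [MeasurableSpace X] (Φ : ℝ → ℝ) (ν : Measure X) (u : X → ℝ) : ℝ≥0∞ :=
  sInf {d : ℝ≥0∞ | ∃ δ : ℝ, 0 < δ ∧ d = ENNReal.ofReal δ ∧
    (∫⁻ x, ENNReal.ofReal (Φ (|u x| / δ)) ∂ν) ≤ 1}

/-- An `N`-dimensional dynamical system on `Ω` preserving `μ`. -/
def IsDynSys {N : ℕ} {Ω : Type*} [MeasurableSpace Ω] (μ : Measure Ω)
    (T : (Fin N → ℝ) → Ω → Ω) : Prop :=
  T 0 = id ∧ (∀ x y : Fin N → ℝ, T (x + y) = T x ∘ T y) ∧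
    (∀ x : Fin N → ℝ, MeasurePreserving (T x) μ μ) ∧
    Measurable fun p : (Fin N → ℝ) × Ω => T p.1 p.2

/-- `ℤ^N`-periodicity. -/
def ZPeriodic {N : ℕ} (g : (Fin N → ℝ) → ℝ) : Prop :=
  ∀ (y : Fin N → ℝ) (k : Fin N → ℤ), g (y + fun i => (k i : ℝ)) = g y

/-- The unit cube `Y = [0,1]^N`. -/
def Ycube (N : ℕ) : Set (Fin N → ℝ) := Set.Icc 0 1

/-- `ℳ` is countably generated modulo `μ`-null sets. -/
def CountGenModNull {Ω : Type*} [MeasurableSpace Ω] (μ : Measure Ω) : Prop :=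
  ∃ S : ℕ → Set Ω, (∀ n, MeasurableSet (S n)) ∧
    ∀ A : Set Ω, MeasurableSet A →
      ∃ B : Set Ω, MeasurableSet[MeasurableSpace.generateFrom (Set.range S)] B ∧
        μ (symmDiff A B) = 0

/-- Weak stochastic two-scale convergence of `(u k)` to `u₀` along the sequence `(ε k)`. -/
def WeakStoch2Scale {N : ℕ} {Ω : Type*} [MeasurableSpace Ω] (μ : Measure Ω)
    (T : (Fin N → ℝ) → Ω → Ω) (Q : Set (Fin N → ℝ)) (ε : ℕ → ℝ)
    (u : ℕ → (Fin N → ℝ) → Ω → ℝ) (u₀ : (Fin N → ℝ) → Ω → (Fin N → ℝ) → ℝ) : Prop :=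
  ∀ φ : (Fin N → ℝ) → ℝ, ContDiff ℝ (⊤ : ℕ∞) φ → HasCompactSupport φ → tsupport φ ⊆ Q →
    ∀ ψ : Ω → ℝ, Measurable ψ → (∃ C : ℝ, ∀ ω, |ψ ω| ≤ C) →
      ∀ g : (Fin N → ℝ) → ℝ, Continuous g → ZPeriodic g →
        Tendsto
          (fun k => ∫ x in Q, (∫ ω, u k x ω * φ x * ψ (T ((ε k)⁻¹ • x) ω) *
              g (((ε k) ^ 2)⁻¹ • x) ∂μ))
          atTop
          (nhds (∫ x in Q, (∫ ω, (∫ y in Ycube N, u₀ x ω y * φ x * ψ ω * g y) ∂μ)))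

/-!
Translating `u k` by `ε k ^ 2 • ρ` and changing variables moves the translation onto the test
function. Its fast variable `x / ε ^ 2` then moves by exactly `-ρ`, while `φ` moves by `O(ε ^ 2)`
and `T (x / ε) ω` by the group element `T (-ε • ρ)`, so the remaining error tends to zero in `L¹`
by continuity of `φ` and strong continuity of the action of `T` on `L¹`. A modular bound on `u k`
makes the family uniformly integrable because `Φ` is superlinear, hence this error is invisible
against `u k`, and `u k (· + ε k ^ 2 • ρ)` two-scale converges to `u₀ (·, ·, · + ρ)` for each `ρ`.
Integrating in `ρ` is dominated convergence, and Jensen's inequality bounds the Luxemburg norms.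
-/

section Orlicz

variable {X : Type*} [MeasurableSpace X] {Φ : ℝ → ℝ} {ν : Measure X}

namespace IsYoung

lemma continuousOn (hΦ : IsYoung Φ) : ContinuousOn Φ (Set.Ici 0) := hΦ.1

lemma convexOn (hΦ : IsYoung Φ) : ConvexOn ℝ (Set.Ici 0) Φ := hΦ.2.1

lemma map_zero (hΦ : IsYoung Φ) : Φ 0 = 0 := hΦ.2.2.1

lemma nonneg (hΦ : IsYoung Φ) {t : ℝ} (ht : 0 ≤ t) : 0 ≤ Φ t := hΦ.2.2.2.2.1 t ht

lemma tendsto_div_atTop (hΦ : IsYoung Φ) : Tendsto (fun t => Φ t / t) atTop atTop :=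
  hΦ.2.2.2.2.2.2

lemma monotoneOn (hΦ : IsYoung Φ) : MonotoneOn Φ (Set.Ici 0) := by
  intro s hs t ht hst
  have h_le_max : Φ s ≤ max (Φ 0) (Φ t) :=
    hΦ.convexOn.le_max_of_mem_Icc Set.self_mem_Ici ht ⟨hs, hst⟩
  rwa [hΦ.map_zero, max_eq_right (hΦ.nonneg ht)] at h_le_max

lemma measurable_comp_abs_div (hΦ : IsYoung Φ) {u : X → ℝ} (hu : Measurable u) {δ : ℝ}
    (hδ : 0 ≤ δ) : Measurable fun x => Φ (|u x| / δ) := by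
  have h_cont : Continuous fun t => Φ |t| :=
    hΦ.continuousOn.comp_continuous continuous_abs abs_nonneg
  simpa only [Function.comp_def, abs_div, abs_of_nonneg hδ] using
    h_cont.measurable.comp (hu.div_const δ)

lemma exists_le_add_mul (hΦ : IsYoung Φ) {η : ℝ} (hη : 0 < η) :
    ∃ R, 0 ≤ R ∧ ∀ t, 0 ≤ t → t ≤ R + η * Φ t := by
  obtain ⟨R, hR⟩ := eventually_atTop.1 (hΦ.tendsto_div_atTop.eventually_ge_atTop η⁻¹)
  refine ⟨max R 0, le_max_right _ _, fun t ht => ?_⟩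
  have hΦt : 0 ≤ η * Φ t := mul_nonneg hη.le (hΦ.nonneg ht)
  rcases le_or_gt t (max R 0) with h_small | h_large
  · linarith
  · have h_slope : η⁻¹ ≤ Φ t / t := hR t ((le_max_left R 0).trans h_large.le)
    rw [le_div_iff₀ ((le_max_right R 0).trans_lt h_large), inv_mul_le_iff₀ hη] at h_slope
    linarith [le_max_right R 0]

end IsYoung

/-- The Orlicz modular `∫ Φ(|u|/δ) dν` of `u` at scale `δ`; the Luxemburg norm of `u` is the
infimum of the scales `δ > 0` at which it is at most `1`. -/
def orliczModular (Φ : ℝ → ℝ) (ν : Measure X) (δ : ℝ) (u : X → ℝ) : ℝ≥0∞ :=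
  ∫⁻ x, ENNReal.ofReal (Φ (|u x| / δ)) ∂ν

lemma luxNorm_le_ofReal {δ : ℝ} (hδ : 0 < δ) {u : X → ℝ} (hu : orliczModular Φ ν δ u ≤ 1) :
    luxNorm Φ ν u ≤ ENNReal.ofReal δ :=
  sInf_le ⟨δ, hδ, rfl, hu⟩

lemma luxNorm_zero (hΦ : IsYoung Φ) : luxNorm Φ ν (fun _ => 0) = 0 := by
  refine le_antisymm (ENNReal.le_of_forall_pos_le_add fun δ hδ _ => ?_) zero_le
  have h_modular : orliczModular Φ ν δ (fun _ => 0) ≤ 1 := by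
    simp [orliczModular, hΦ.map_zero]
  simpa using luxNorm_le_ofReal (NNReal.coe_pos.2 hδ) h_modular

lemma orliczModular_le_one_of_luxNorm_lt (hΦ : IsYoung Φ) {u : X → ℝ} {δ : ℝ}
    (hu : luxNorm Φ ν u < ENNReal.ofReal δ) : orliczModular Φ ν δ u ≤ 1 := by
  obtain ⟨_, ⟨δ', hδ', rfl, hu'⟩, hlt⟩ := sInf_lt_iff.1 hu
  have hδ'δ : δ' < δ := (ENNReal.ofReal_lt_ofReal_iff_of_nonneg hδ'.le).1 hlt
  refine (lintegral_mono fun x => ENNReal.ofReal_le_ofReal ?_).trans hu'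
  have hδ : 0 < δ := hδ'.trans hδ'δ
  exact hΦ.monotoneOn (Set.mem_Ici.2 (by positivity)) (Set.mem_Ici.2 (by positivity))
    (by gcongr)

lemma exists_forall_orliczModular_le_one (hΦ : IsYoung Φ) {ι : Type*} {u : ι → X → ℝ}
    (hu : (⨆ i, luxNorm Φ ν (u i)) < ⊤) : ∃ δ, 0 < δ ∧ ∀ i, orliczModular Φ ν δ (u i) ≤ 1 := by
  obtain ⟨δ, hδ⟩ := ENNReal.lt_iff_exists_nnreal_btwn.1 hu
  have hδ_pos : 0 < δ := ENNReal.coe_pos.1 (zero_le.trans_lt hδ.1)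
  refine ⟨δ, hδ_pos, fun i => orliczModular_le_one_of_luxNorm_lt hΦ ?_⟩
  rw [ENNReal.ofReal_coe_nnreal]
  exact (le_iSup (fun i => luxNorm Φ ν (u i)) i).trans_lt hδ.1

lemma lintegral_enorm_mul_le_of_orliczModular_le_one (hΦ : IsYoung Φ) {δ : ℝ} (hδ : 0 < δ)
    {u h : X → ℝ} (hu : Measurable u) (hh : Measurable h) (hu_mod : orliczModular Φ ν δ u ≤ 1)
    {C : ℝ} (hC : ∀ x, ‖h x‖ ≤ C) {η R : ℝ} (hη : 0 ≤ η) (hR : 0 ≤ R)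
    (hηR : ∀ t, 0 ≤ t → t ≤ R + η * Φ t) :
    ∫⁻ x, ‖u x * h x‖ₑ ∂ν ≤
      ENNReal.ofReal (δ * R) * ∫⁻ x, ‖h x‖ₑ ∂ν + ENNReal.ofReal (δ * η * C) := by
  have hΦu : ∀ x, 0 ≤ Φ (|u x| / δ) := fun x => hΦ.nonneg (by positivity)
  have h_pointwise : ∀ x, ‖u x * h x‖ₑ ≤ ENNReal.ofReal (δ * R) * ‖h x‖ₑ +
      ENNReal.ofReal (δ * η * C) * ENNReal.ofReal (Φ (|u x| / δ)) := by
    intro x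
    have hC0 : 0 ≤ C := (norm_nonneg _).trans (hC x)
    have hu_le : |u x| ≤ δ * (R + η * Φ (|u x| / δ)) :=
      (div_le_iff₀' hδ).1 (hηR (|u x| / δ) (by positivity))
    simp only [← ofReal_norm]
    rw [← ENNReal.ofReal_mul (by positivity), ← ENNReal.ofReal_mul (by positivity),
      ← ENNReal.ofReal_add (by positivity) (mul_nonneg (by positivity) (hΦu x)), norm_mul]
    refine ENNReal.ofReal_le_ofReal ?_
    calc ‖u x‖ * ‖h x‖ ≤ δ * (R + η * Φ (|u x| / δ)) * ‖h x‖ := by gcongr; exact hu_le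
      _ = δ * R * ‖h x‖ + δ * η * Φ (|u x| / δ) * ‖h x‖ := by ring
      _ ≤ δ * R * ‖h x‖ + δ * η * Φ (|u x| / δ) * C := by
        have := hΦu x
        gcongr
        exact hC x
      _ = δ * R * ‖h x‖ + δ * η * C * Φ (|u x| / δ) := by ring
  calc ∫⁻ x, ‖u x * h x‖ₑ ∂ν
      ≤ ∫⁻ x, (ENNReal.ofReal (δ * R) * ‖h x‖ₑ +
          ENNReal.ofReal (δ * η * C) * ENNReal.ofReal (Φ (|u x| / δ))) ∂ν :=
        lintegral_mono h_pointwise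
    _ = ENNReal.ofReal (δ * R) * ∫⁻ x, ‖h x‖ₑ ∂ν +
          ENNReal.ofReal (δ * η * C) * orliczModular Φ ν δ u := by
        rw [lintegral_add_left (hh.enorm.const_mul _), lintegral_const_mul _ hh.enorm,
          lintegral_const_mul _ (hΦ.measurable_comp_abs_div hu hδ.le).ennreal_ofReal,
          orliczModular]
    _ ≤ ENNReal.ofReal (δ * R) * ∫⁻ x, ‖h x‖ₑ ∂ν + ENNReal.ofReal (δ * η * C) := by
        gcongr
        exact mul_le_of_le_one_right' hu_mod

lemma exists_forall_lintegral_enorm_le [IsFiniteMeasure ν] (hΦ : IsYoung Φ) {δ : ℝ} (hδ : 0 < δ) :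
    ∃ D : ℝ≥0∞, D ≠ ⊤ ∧ ∀ u : X → ℝ, Measurable u → orliczModular Φ ν δ u ≤ 1 →
      ∫⁻ x, ‖u x‖ₑ ∂ν ≤ D := by
  obtain ⟨R, hR, h_le⟩ := hΦ.exists_le_add_mul one_pos
  refine ⟨ENNReal.ofReal (δ * R) * ν Set.univ + ENNReal.ofReal (δ * 1 * 1), by finiteness,
    fun u hu hu_mod => ?_⟩
  simpa using lintegral_enorm_mul_le_of_orliczModular_le_one hΦ hδ hu measurable_const hu_mod
    (h := fun _ => 1) (C := 1) (by simp) zero_le_one hR h_le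

lemma integrable_of_orliczModular_le_one [IsFiniteMeasure ν] (hΦ : IsYoung Φ) {δ : ℝ}
    (hδ : 0 < δ) {u : X → ℝ} (hu : Measurable u) (hu_mod : orliczModular Φ ν δ u ≤ 1) :
    Integrable u ν := by
  obtain ⟨D, hD, hD_le⟩ := exists_forall_lintegral_enorm_le (ν := ν) hΦ hδ
  exact ⟨hu.aestronglyMeasurable, (hD_le u hu hu_mod).trans_lt hD.lt_top⟩

-- Superlinearity of `Φ` makes `u` uniformly integrable: `|u| ≤ δ R + δ η Φ(|u|/δ)` with `η` small.
lemma tendsto_integral_mul_of_orliczModular_le_one (hΦ : IsYoung Φ) {δ : ℝ} (hδ : 0 < δ)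
    {ι : Type*} {l : Filter ι} {u h : ι → X → ℝ} (hu : ∀ i, Measurable (u i))
    (hh : ∀ i, Measurable (h i)) (hu_mod : ∀ i, orliczModular Φ ν δ (u i) ≤ 1) {C : ℝ}
    (hC : ∀ i x, ‖h i x‖ ≤ C) (hh0 : Tendsto (fun i => ∫⁻ x, ‖h i x‖ₑ ∂ν) l (𝓝 0)) :
    Tendsto (fun i => ∫ x, u i x * h i x ∂ν) l (𝓝 0) := by
  suffices h_lintegral : Tendsto (fun i => ∫⁻ x, ‖u i x * h i x‖ₑ ∂ν) l (𝓝 0) from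
    tendsto_zero_iff_enorm_tendsto_zero.2 <|
      tendsto_of_tendsto_of_tendsto_of_le_of_le tendsto_const_nhds h_lintegral
        (fun _ => zero_le) fun _ => enorm_integral_le_lintegral_enorm _
  refine ENNReal.tendsto_nhds_zero.2 fun e he => ?_
  obtain ⟨e', he'_pos, he'_lt⟩ := ENNReal.lt_iff_exists_nnreal_btwn.1 he
  have he' : (0 : ℝ) < e' := NNReal.coe_pos.2 (ENNReal.coe_pos.1 he'_pos)
  set η : ℝ := e' / (2 * δ * (|C| + 1)) with hη
  obtain ⟨R, hR, h_le⟩ := hΦ.exists_le_add_mul (η := η) (by positivity)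
  have hηC : δ * η * C ≤ e' / 2 :=
    calc δ * η * C ≤ δ * η * (|C| + 1) := by gcongr; linarith [le_abs_self C]
      _ = e' / 2 := by rw [hη]; field_simp
  have h_main : Tendsto (fun i => ENNReal.ofReal (δ * R) * ∫⁻ x, ‖h i x‖ₑ ∂ν) l (𝓝 0) := by
    simpa using ENNReal.Tendsto.const_mul hh0 (.inr (ENNReal.ofReal_ne_top (r := δ * R)))
  filter_upwards [ENNReal.tendsto_nhds_zero.1 h_main (ENNReal.ofReal (e' / 2)) (by simpa using he')]
    with i hi
  calc ∫⁻ x, ‖u i x * h i x‖ₑ ∂ν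
      ≤ ENNReal.ofReal (δ * R) * ∫⁻ x, ‖h i x‖ₑ ∂ν + ENNReal.ofReal (δ * η * C) :=
        lintegral_enorm_mul_le_of_orliczModular_le_one hΦ hδ (hu i) (hh i) (hu_mod i) (hC i)
          (by positivity) hR h_le
    _ ≤ ENNReal.ofReal (e' / 2) + ENNReal.ofReal (e' / 2) := by gcongr
    _ = e' := by
        rw [← ENNReal.ofReal_add (by positivity) (by positivity), add_halves,
          ENNReal.ofReal_coe_nnreal]
    _ ≤ e := he'_lt.le

lemma tendsto_integral_mul_of_tendsto_lintegral_enorm_sub [IsFiniteMeasure ν] (hΦ : IsYoung Φ)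
    {δ : ℝ} (hδ : 0 < δ) {ι : Type*} {l : Filter ι} {u f f' : ι → X → ℝ}
    (hu : ∀ i, Measurable (u i)) (hu_mod : ∀ i, orliczModular Φ ν δ (u i) ≤ 1)
    (hf : ∀ i, Measurable (f i)) (hf' : ∀ i, Measurable (f' i)) {C : ℝ}
    (hC : ∀ i x, ‖f i x‖ ≤ C) (hC' : ∀ i x, ‖f' i x‖ ≤ C)
    (h_sub : Tendsto (fun i => ∫⁻ x, ‖f' i x - f i x‖ₑ ∂ν) l (𝓝 0)) {L : ℝ}
    (h_lim : Tendsto (fun i => ∫ x, u i x * f i x ∂ν) l (𝓝 L)) :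
    Tendsto (fun i => ∫ x, u i x * f' i x ∂ν) l (𝓝 L) := by
  have h_error : Tendsto (fun i => ∫ x, u i x * (f' i x - f i x) ∂ν) l (𝓝 0) :=
    tendsto_integral_mul_of_orliczModular_le_one hΦ hδ hu (fun i => (hf' i).sub (hf i)) hu_mod
      (fun i x => norm_sub_le_of_le (hC' i x) (hC i x)) h_sub
  have h_int : ∀ (f : ι → X → ℝ), (∀ i, Measurable (f i)) → (∀ i x, ‖f i x‖ ≤ C) →
      ∀ i, Integrable (fun x => u i x * f i x) ν := fun f hf hC i =>
    (integrable_of_orliczModular_le_one hΦ hδ (hu i) (hu_mod i)).mul_bdd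
      (hf i).aestronglyMeasurable (.of_forall (hC i))
  simp only [mul_sub, integral_sub (h_int f' hf' hC' _) (h_int f hf hC _)] at h_error
  simpa only [sub_add_cancel, zero_add] using h_error.add h_lim

lemma ofReal_map_abs_integral_div_le (hΦ : IsYoung Φ) [IsFiniteMeasure ν] {f : X → ℝ}
    (hf : Measurable f) {δ : ℝ} (hδ : 0 < δ) :
    ENNReal.ofReal (Φ (|∫ x, f x ∂ν| / (δ * ν.real Set.univ))) ≤
      (ν Set.univ)⁻¹ * orliczModular Φ ν δ f := by
  rcases eq_zero_or_neZero ν with rfl | hν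
  · simp [hΦ.map_zero]
  by_cases hf_int : Integrable f ν
  swap
  · simp [integral_undef hf_int, hΦ.map_zero]
  by_cases h_top : orliczModular Φ ν δ f = ⊤
  · simp [h_top, ENNReal.mul_top]
  have hΦf : ∀ x, 0 ≤ Φ (|f x| / δ) := fun x => hΦ.nonneg (by positivity)
  have hΦf_int : Integrable (fun x => Φ (|f x| / δ)) ν :=
    ⟨(hΦ.measurable_comp_abs_div hf hδ.le).aestronglyMeasurable,
      (hasFiniteIntegral_iff_ofReal (.of_forall hΦf)).2 (lt_top_iff_ne_top.2 h_top)⟩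
  have h_jensen : Φ (⨍ x, |f x| / δ ∂ν) ≤ ⨍ x, Φ (|f x| / δ) ∂ν :=
    hΦ.convexOn.map_average_le hΦ.continuousOn isClosed_Ici
      (.of_forall fun x => Set.mem_Ici.2 (by positivity)) (hf_int.abs.div_const δ) hΦf_int
  have h_abs : |∫ x, f x ∂ν| / (δ * ν.real Set.univ) ≤ ⨍ x, |f x| / δ ∂ν := by
    rw [average_eq, integral_div, smul_eq_mul, inv_mul_eq_div, div_div]
    gcongr
    exact abs_integral_le_integral_abs
  calc ENNReal.ofReal (Φ (|∫ x, f x ∂ν| / (δ * ν.real Set.univ)))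
      ≤ ENNReal.ofReal (⨍ x, Φ (|f x| / δ) ∂ν) := by
        refine ENNReal.ofReal_le_ofReal (le_trans (hΦ.monotoneOn ?_ ?_ h_abs) h_jensen)
        · exact Set.mem_Ici.2 (by positivity)
        · exact Set.mem_Ici.2 ((by positivity : (0 : ℝ) ≤ _).trans h_abs)
    _ = (ν Set.univ)⁻¹ * orliczModular Φ ν δ f := by
        rw [average, ofReal_integral_eq_lintegral_ofReal hΦf_int.to_average (.of_forall hΦf),
          lintegral_smul_measure, smul_eq_mul, orliczModular]

end Orlicz

section Translation

variable {E F : Type*} [AddGroup E] [TopologicalSpace E] [IsTopologicalAddGroup E]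
  [MeasurableSpace E] [BorelSpace E] [NormedAddCommGroup F] {ν : Measure E}
  [ν.IsAddRightInvariant] [IsLocallyFiniteMeasure ν] [ν.InnerRegularCompactLTTop]

lemma tendsto_lintegral_enorm_comp_add_right_sub {f : E → F} (hf : Integrable f ν) :
    Tendsto (fun h => ∫⁻ x, ‖f (x + h) - f x‖ₑ ∂ν) (𝓝 0) (𝓝 0) := by
  have hf_memLp : MemLp f 1 ν := memLp_one_iff_integrable.2 hf
  have h_pres : ∀ h : E, MeasurePreserving (· + h) ν ν := measurePreserving_add_right ν
  let translation : C(E, C(E, E)) :=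
    (ContinuousMap.mk (fun p : E × E => p.2 + p.1) (by fun_prop)).curry
  have h_cont : Continuous fun h => Lp.compMeasurePreserving (· + h) (h_pres h) hf_memLp.toLp :=
    continuous_const.compMeasurePreservingLp translation.continuous h_pres ENNReal.one_ne_top
  have h_edist := tendsto_iff_edist_tendsto_0.1 (h_cont.tendsto 0)
  refine h_edist.congr fun h => ?_
  simp_rw [Lp.toLp_compMeasurePreserving, Lp.edist_toLp_toLp, eLpNorm_one_eq_lintegral_enorm]
  simp

lemma tendsto_setLIntegral_enorm_comp_add_right_sub [LocallyCompactSpace E] [T2Space E]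
    {f : E → F} (hf : LocallyIntegrable f ν) {K : Set E} (hK : IsCompact K) :
    Tendsto (fun h => ∫⁻ x in K, ‖f (x + h) - f x‖ₑ ∂ν) (𝓝 0) (𝓝 0) := by
  obtain ⟨L, hL, hKL⟩ := exists_compact_superset hK
  obtain ⟨V, hV, hKV⟩ := compact_open_separated_add_right hK isOpen_interior hKL
  have h_indicator : Integrable (L.indicator f) ν :=
    (integrable_indicator_iff hL.measurableSet).2 (hf.integrableOn_isCompact hL)
  refine tendsto_of_tendsto_of_tendsto_of_le_of_le' tendsto_const_nhds
    (tendsto_lintegral_enorm_comp_add_right_sub h_indicator) (.of_forall fun _ => zero_le) ?_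
  filter_upwards [hV] with h hh
  refine le_trans (le_of_eq ?_) (setLIntegral_le_lintegral K _)
  refine setLIntegral_congr_fun hK.measurableSet fun x hx => ?_
  have hx_mem : x ∈ L := interior_subset (hKL hx)
  have hxh_mem : x + h ∈ L := interior_subset (hKV (Set.add_mem_add hx hh))
  simp only [Set.indicator_of_mem hx_mem, Set.indicator_of_mem hxh_mem]

end Translation

section DynamicalSystem

variable {N : ℕ} {Ω : Type*} [MeasurableSpace Ω] {μ : Measure Ω} {T : (Fin N → ℝ) → Ω → Ω}

namespace IsDynSys

lemma map_add (hT : IsDynSys μ T) (x y : Fin N → ℝ) (ω : Ω) : T (x + y) ω = T x (T y ω) :=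
  congrFun (hT.2.1 x y) ω

lemma measurePreserving (hT : IsDynSys μ T) (x : Fin N → ℝ) : MeasurePreserving (T x) μ μ :=
  hT.2.2.1 x

lemma measurable (hT : IsDynSys μ T) : Measurable fun p : (Fin N → ℝ) × Ω => T p.1 p.2 :=
  hT.2.2.2

lemma measurable_comp_smul {β : Type*} [MeasurableSpace β] {f : Ω → β} (hT : IsDynSys μ T)
    (hf : Measurable f) (c : ℝ) :
    Measurable fun p : (Fin N → ℝ) × Ω => f (T (c • p.1) p.2) :=
  hf.comp (hT.measurable.comp ((measurable_fst.const_smul c).prodMk measurable_snd))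

variable {ψ : Ω → ℝ}

lemma measurable_enorm_sub (hT : IsDynSys μ T) (hψ : Measurable ψ) (h : Fin N → ℝ) :
    Measurable fun p : Ω × (Fin N → ℝ) => ‖ψ (T (p.2 + h) p.1) - ψ (T p.2 p.1)‖ₑ := by
  have hψT : Measurable fun p : (Fin N → ℝ) × Ω => ψ (T p.1 p.2) := hψ.comp hT.measurable
  exact ((hψT.comp ((measurable_snd.add_const h).prodMk measurable_fst)).sub
    (hψT.comp measurable_swap)).enorm

lemma lintegral_setLIntegral_enorm_sub [SFinite μ] (hT : IsDynSys μ T) (hψ : Measurable ψ)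
    (K : Set (Fin N → ℝ)) (h : Fin N → ℝ) :
    ∫⁻ ω, (∫⁻ x in K, ‖ψ (T (x + h) ω) - ψ (T x ω)‖ₑ) ∂μ =
      (∫⁻ ω, ‖ψ (T h ω) - ψ ω‖ₑ ∂μ) * volume K := by
  rw [lintegral_lintegral_swap (hT.measurable_enorm_sub hψ h).aemeasurable, ← setLIntegral_const]
  refine lintegral_congr fun x => ?_
  have h_meas : Measurable fun ω => ‖ψ (T h ω) - ψ ω‖ₑ :=
    ((hψ.comp (hT.measurePreserving h).measurable).sub hψ).enorm
  simp_rw [add_comm x h, hT.map_add]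
  exact (hT.measurePreserving x).lintegral_comp h_meas

-- Averaging over `x` in a ball and invariance of `μ` reduce this to continuity of translations
-- in `L¹_loc(ℝ^N)` along each orbit `x ↦ ψ(T(x)ω)`.
lemma tendsto_lintegral_enorm_comp_sub [IsFiniteMeasure μ] (hT : IsDynSys μ T)
    (hψ : Measurable ψ) {C : ℝ} (hC : ∀ ω, ‖ψ ω‖ ≤ C) :
    Tendsto (fun h => ∫⁻ ω, ‖ψ (T h ω) - ψ ω‖ₑ ∂μ) (𝓝 0) (𝓝 0) := by
  let K : Set (Fin N → ℝ) := Metric.closedBall 0 1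
  have hK : IsCompact K := isCompact_closedBall 0 1
  have hK_ne_zero : volume K ≠ 0 := (Metric.measure_closedBall_pos volume _ one_pos).ne'
  have h_bound : ∀ ω ω', ‖ψ ω - ψ ω'‖ₑ ≤ ENNReal.ofReal (C + C) := fun ω ω' => by
    rw [← ofReal_norm]
    exact ENNReal.ofReal_le_ofReal (norm_sub_le_of_le (hC ω) (hC ω'))
  have h_orbit : ∀ ω, LocallyIntegrable fun x => ψ (T x ω) := fun ω =>
    (locallyIntegrable_const C).mono
      (hψ.comp (hT.measurable.comp (measurable_id.prodMk measurable_const))).aestronglyMeasurable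
      (.of_forall fun x => (hC _).trans (le_abs_self C))
  have h_averaged : Tendsto (fun h => ∫⁻ ω, (∫⁻ x in K, ‖ψ (T (x + h) ω) - ψ (T x ω)‖ₑ) ∂μ)
      (𝓝 0) (𝓝 (∫⁻ _, 0 ∂μ)) := by
    refine tendsto_lintegral_filter_of_dominated_convergence
      (fun _ => ENNReal.ofReal (C + C) * volume K)
      (.of_forall fun h => (hT.measurable_enorm_sub hψ h).lintegral_prod_right')
      (.of_forall fun h => .of_forall fun ω => ?_) ?_
      (.of_forall fun ω => tendsto_setLIntegral_enorm_comp_add_right_sub (h_orbit ω) hK)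
    · exact (lintegral_mono fun x => h_bound _ _).trans_eq (setLIntegral_const K _)
    · rw [lintegral_const]
      have := hK.measure_ne_top (μ := volume)
      finiteness
  simp only [hT.lintegral_setLIntegral_enorm_sub hψ, lintegral_zero] at h_averaged
  simpa only [ENNReal.mul_div_cancel_right hK_ne_zero hK.measure_ne_top, ENNReal.zero_div] using
    ENNReal.Tendsto.div_const h_averaged (.inr hK_ne_zero)

end IsDynSys

end DynamicalSystem

section ProductTranslation

lemma restrict_prod_eq_prod_restrict {E Ω : Type*} [MeasurableSpace E] [MeasurableSpace Ω]
    (κ : Measure E) [SFinite κ] (μ : Measure Ω) [SFinite μ] (Q : Set E) :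
    (κ.restrict Q).prod μ = (κ.prod μ).restrict (Q ×ˢ Set.univ) := by
  rw [← Measure.prod_restrict, Measure.restrict_univ]

variable {E Ω : Type*} [AddGroup E] [MeasurableSpace E] [MeasurableSpace Ω]
  {κ : Measure E} [κ.IsAddRightInvariant] [SFinite κ] {μ : Measure Ω} [SFinite μ] {Q : Set E}

section MeasurableAdd

variable [MeasurableAdd E]

lemma measurePreserving_prodMap_add_right (κ : Measure E) [κ.IsAddRightInvariant] [SFinite κ]
    (μ : Measure Ω) [SFinite μ] (a : E) :
    MeasurePreserving ((MeasurableEquiv.addRight a).prodCongr (MeasurableEquiv.refl Ω))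
      (κ.prod μ) (κ.prod μ) :=
  (measurePreserving_add_right κ a).prod (MeasurePreserving.id μ)

lemma lintegral_restrict_prod_comp_add_right_le {F : E × Ω → ℝ≥0∞}
    (hF : ∀ x ∉ Q, ∀ ω, F (x, ω) = 0) (a : E) :
    ∫⁻ p, F (p.1 + a, p.2) ∂(κ.restrict Q).prod μ ≤ ∫⁻ p, F p ∂(κ.restrict Q).prod μ := by
  have h_supp : F.support ⊆ Q ×ˢ Set.univ := fun p hp =>
    ⟨by_contra fun hx => hp (hF p.1 hx p.2), trivial⟩
  rw [restrict_prod_eq_prod_restrict]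
  calc ∫⁻ p in Q ×ˢ Set.univ, F (p.1 + a, p.2) ∂κ.prod μ
      ≤ ∫⁻ p, F (p.1 + a, p.2) ∂κ.prod μ := setLIntegral_le_lintegral _ _
    _ = ∫⁻ p, F p ∂κ.prod μ :=
      (measurePreserving_prodMap_add_right κ μ a).lintegral_comp_emb
        (MeasurableEquiv.measurableEmbedding _) F
    _ = ∫⁻ p in Q ×ˢ Set.univ, F p ∂κ.prod μ := (setLIntegral_eq_of_support_subset h_supp).symm

lemma integrable_restrict_prod_comp_add_right {u : E × Ω → ℝ} (hu : Measurable u)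
    (hu_zero : ∀ x ∉ Q, ∀ ω, u (x, ω) = 0) (hu_int : Integrable u ((κ.restrict Q).prod μ)) (a : E) :
    Integrable (fun p => u (p.1 + a, p.2)) ((κ.restrict Q).prod μ) :=
  ⟨(hu.comp (f := fun p : E × Ω => (p.1 + a, p.2)) (by fun_prop)).aestronglyMeasurable,
    (lintegral_restrict_prod_comp_add_right_le (F := fun p => ‖u p‖ₑ)
      (fun x hx ω => by rw [hu_zero x hx, enorm_zero]) a).trans_lt hu_int.2⟩

lemma integral_restrict_prod_comp_add_right_mul {u f : E × Ω → ℝ}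
    (hu : ∀ x ∉ Q, ∀ ω, u (x, ω) = 0) (hf : ∀ x ∉ Q, ∀ ω, f (x, ω) = 0) (a : E) :
    ∫ p, u (p.1 + a, p.2) * f p ∂(κ.restrict Q).prod μ =
      ∫ p, u p * f (p.1 - a, p.2) ∂(κ.restrict Q).prod μ := by
  rw [restrict_prod_eq_prod_restrict]
  calc ∫ p in Q ×ˢ Set.univ, u (p.1 + a, p.2) * f p ∂κ.prod μ
      = ∫ p, u (p.1 + a, p.2) * f p ∂κ.prod μ :=
        setIntegral_eq_integral_of_forall_compl_eq_zero fun p hp => by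
          rw [hf p.1 (by simpa using hp) p.2, mul_zero]
    _ = ∫ p, u (p.1 + a, p.2) * f (p.1 + a - a, p.2) ∂κ.prod μ := by
        simp only [add_sub_cancel_right]
    _ = ∫ p, u p * f (p.1 - a, p.2) ∂κ.prod μ :=
        (measurePreserving_prodMap_add_right κ μ a).integral_comp
          (MeasurableEquiv.measurableEmbedding _) fun p => u p * f (p.1 - a, p.2)
    _ = ∫ p in Q ×ˢ Set.univ, u p * f (p.1 - a, p.2) ∂κ.prod μ :=
        (setIntegral_eq_integral_of_forall_compl_eq_zero fun p hp => by
          rw [hu p.1 (by simpa using hp) p.2, zero_mul]).symm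

end MeasurableAdd

lemma luxNorm_integral_comp_add_right_le [MeasurableAdd₂ E] {Φ : ℝ → ℝ} (hΦ : IsYoung Φ)
    {u : E × Ω → ℝ} (hu : Measurable u) (hu_zero : ∀ x ∉ Q, ∀ ω, u (x, ω) = 0) {δ : ℝ} (hδ : 0 < δ)
    (hu_mod : orliczModular Φ ((κ.restrict Q).prod μ) δ u ≤ 1) {R : Type*}
    [MeasurableSpace R] (σ : Measure R) [IsFiniteMeasure σ] {s : R → E} (hs : Measurable s) :
    luxNorm Φ ((κ.restrict Q).prod μ) (fun p => ∫ ρ, u (p.1 + s ρ, p.2) ∂σ) ≤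
      ENNReal.ofReal (δ * σ.real Set.univ) := by
  rcases eq_zero_or_neZero σ with rfl | hσ
  · simp [luxNorm_zero hΦ]
  have h_meas : Measurable fun q : (E × Ω) × R =>
      ENNReal.ofReal (Φ (|u (q.1.1 + s q.2, q.1.2)| / δ)) :=
    (hΦ.measurable_comp_abs_div (by fun_prop) hδ.le).ennreal_ofReal
  refine luxNorm_le_ofReal (mul_pos hδ measureReal_univ_pos) ?_
  calc orliczModular Φ ((κ.restrict Q).prod μ) (δ * σ.real Set.univ)
        (fun p => ∫ ρ, u (p.1 + s ρ, p.2) ∂σ)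
      ≤ ∫⁻ p, (σ Set.univ)⁻¹ * (∫⁻ ρ, ENNReal.ofReal (Φ (|u (p.1 + s ρ, p.2)| / δ)) ∂σ)
          ∂(κ.restrict Q).prod μ :=
        lintegral_mono fun p => ofReal_map_abs_integral_div_le hΦ (by fun_prop) hδ
    _ = (σ Set.univ)⁻¹ * ∫⁻ ρ, (∫⁻ p, ENNReal.ofReal (Φ (|u (p.1 + s ρ, p.2)| / δ))
          ∂(κ.restrict Q).prod μ) ∂σ := by
        rw [lintegral_const_mul _ h_meas.lintegral_prod_right',
          lintegral_lintegral_swap h_meas.aemeasurable]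
    _ ≤ (σ Set.univ)⁻¹ * ∫⁻ _, 1 ∂σ := by
        gcongr with ρ
        refine (lintegral_restrict_prod_comp_add_right_le
          (F := fun p => ENNReal.ofReal (Φ (|u p| / δ))) (fun x hx ω => ?_) (s ρ)).trans hu_mod
        simp [hu_zero x hx, hΦ.map_zero]
    _ = 1 := by
        rw [lintegral_one, ENNReal.inv_mul_cancel (NeZero.ne _) (measure_ne_top σ _)]

end ProductTranslation

section Periodic

variable {N : ℕ}

instance isFiniteMeasure_restrict_Ycube : IsFiniteMeasure (volume.restrict (Ycube N)) :=
  isFiniteMeasure_restrict.2 isCompact_Icc.measure_ne_top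

lemma restrict_Ycube_eq_restrict_fundamentalDomain :
    volume.restrict (Ycube N) =
      volume.restrict (ZSpan.fundamentalDomain (Pi.basisFun ℝ (Fin N))) := by
  refine Measure.restrict_congr_set ?_
  rw [ZSpan.fundamentalDomain_pi_basisFun]
  exact (Measure.univ_pi_Ico_ae_eq_Icc (μ := fun _ : Fin N => (volume : Measure ℝ))
    (f := 0) (g := 1)).symm

lemma apply_vadd_eq_of_forall_add_intCast {β : Type*} {f : (Fin N → ℝ) → β}
    (hf : ∀ (y : Fin N → ℝ) (k : Fin N → ℤ), f (y + fun i => (k i : ℝ)) = f y)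
    (z : (Submodule.span ℤ (Set.range (Pi.basisFun ℝ (Fin N)))).toAddSubgroup)
    (y : Fin N → ℝ) : f (z +ᵥ y) = f y := by
  obtain ⟨z, hz⟩ := z
  rw [Submodule.mem_toAddSubgroup, Module.Basis.mem_span_iff_repr_mem] at hz
  choose k hk using hz
  obtain rfl : z = fun i => (k i : ℝ) := funext fun i => by simpa using (hk i).symm
  rw [AddSubgroup.vadd_def, vadd_eq_add, add_comm, hf]

open Pointwise in
lemma setLIntegral_Ycube_comp_add_right {f : (Fin N → ℝ) → ℝ≥0∞}
    (hf : ∀ (y : Fin N → ℝ) (k : Fin N → ℤ), f (y + fun i => (k i : ℝ)) = f y) (ρ : Fin N → ℝ) :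
    ∫⁻ y in Ycube N, f (y + ρ) = ∫⁻ y in Ycube N, f y := by
  let D := ZSpan.fundamentalDomain (Pi.basisFun ℝ (Fin N))
  have hD := ZSpan.isAddFundamentalDomain' (Pi.basisFun ℝ (Fin N)) volume
  have : Countable (Submodule.span ℤ (Set.range (Pi.basisFun ℝ (Fin N)))).toAddSubgroup :=
    inferInstanceAs (Countable (Submodule.span ℤ (Set.range (Pi.basisFun ℝ (Fin N)))))
  simp only [restrict_Ycube_eq_restrict_fundamentalDomain, add_comm _ ρ]
  calc ∫⁻ y in D, f (ρ + y) = ∫⁻ y in ρ +ᵥ D, f y :=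
        (measurePreserving_add_left volume ρ).setLIntegral_comp_emb
          (measurableEmbedding_addLeft ρ) f D
    _ = ∫⁻ y in D, f y :=
        (hD.vadd_of_comm ρ).setLIntegral_eq hD f (apply_vadd_eq_of_forall_add_intCast hf)

namespace ZPeriodic

variable {g : (Fin N → ℝ) → ℝ}

lemma exists_norm_le (hg : ZPeriodic g) (hg_cont : Continuous g) : ∃ C, ∀ y, ‖g y‖ ≤ C := by
  obtain ⟨C, hC⟩ := (isCompact_Icc (a := (0 : Fin N → ℝ)) (b := 1)).exists_bound_of_continuousOn
    hg_cont.continuousOn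
  refine ⟨C, fun y => ?_⟩
  rw [← hg y fun i => -⌊y i⌋]
  refine hC _ ⟨fun i => ?_, fun i => ?_⟩
  · simp [Int.floor_le]
  · simp only [Pi.add_apply, Pi.one_apply, Int.cast_neg]
    linarith [Int.lt_floor_add_one (y i)]

lemma comp_sub_const (hg : ZPeriodic g) (ρ : Fin N → ℝ) : ZPeriodic fun y => g (y - ρ) :=
  fun y k => by simpa only [add_sub_right_comm] using hg (y - ρ) k

open Pointwise in
lemma setIntegral_Ycube_comp_add_right (hg : ZPeriodic g) (ρ : Fin N → ℝ) :
    ∫ y in Ycube N, g (y + ρ) = ∫ y in Ycube N, g y := by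
  let D := ZSpan.fundamentalDomain (Pi.basisFun ℝ (Fin N))
  have hD := ZSpan.isAddFundamentalDomain' (Pi.basisFun ℝ (Fin N)) volume
  have : Countable (Submodule.span ℤ (Set.range (Pi.basisFun ℝ (Fin N)))).toAddSubgroup :=
    inferInstanceAs (Countable (Submodule.span ℤ (Set.range (Pi.basisFun ℝ (Fin N)))))
  simp only [restrict_Ycube_eq_restrict_fundamentalDomain, add_comm _ ρ]
  calc ∫ y in D, g (ρ + y) = ∫ y in ρ +ᵥ D, g y :=
        ((measurePreserving_add_left volume ρ).setIntegral_image_emb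
          (measurableEmbedding_addLeft ρ) g D).symm
    _ = ∫ y in D, g y :=
        (hD.vadd_of_comm ρ).setIntegral_eq hD (apply_vadd_eq_of_forall_add_intCast hg)

end ZPeriodic

end Periodic

section Averaging

variable {X R : Type*} [MeasurableSpace X] [MeasurableSpace R] {ν : Measure X} [SFinite ν]
  {σ : Measure R}

lemma integral_integral_mul_eq_integral_integral [SFinite σ] {U : X × R → ℝ} {f : X → ℝ} {C : ℝ}
    (hU : Integrable U (ν.prod σ)) (hf : Measurable f) (hC : ∀ x, ‖f x‖ ≤ C) :
    ∫ x, (∫ ρ, U (x, ρ) ∂σ) * f x ∂ν = ∫ ρ, (∫ x, U (x, ρ) * f x ∂ν) ∂σ := by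
  have h_int : Integrable (fun q : X × R => U q * f q.1) (ν.prod σ) :=
    hU.mul_bdd (hf.comp measurable_fst).aestronglyMeasurable (.of_forall fun q => hC q.1)
  simp only [← integral_mul_const]
  exact integral_integral_swap h_int

lemma integrable_prod_of_forall_lintegral_enorm_le [IsFiniteMeasure σ] {U : X × R → ℝ}
    (hU : Measurable U) {D : ℝ≥0∞} (hD : D ≠ ⊤) (hU_le : ∀ ρ, ∫⁻ x, ‖U (x, ρ)‖ₑ ∂ν ≤ D) :
    Integrable U (ν.prod σ) := by
  refine ⟨hU.aestronglyMeasurable, ?_⟩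
  calc ∫⁻ q, ‖U q‖ₑ ∂ν.prod σ = ∫⁻ ρ, (∫⁻ x, ‖U (x, ρ)‖ₑ ∂ν) ∂σ :=
        lintegral_prod_symm' _ hU.enorm
    _ ≤ ∫⁻ _, D ∂σ := lintegral_mono hU_le
    _ < ⊤ := by rw [lintegral_const]; finiteness

lemma tendsto_integral_integral_mul [IsFiniteMeasure σ] {ι : Type*} {l : Filter ι}
    [l.IsCountablyGenerated] {U : ι → X × R → ℝ} {f : ι → X → ℝ} {L : R → ℝ} {C : ℝ} {D : ℝ≥0∞}
    (hU : ∀ i, Measurable (U i)) (hD : D ≠ ⊤) (hU_le : ∀ i ρ, ∫⁻ x, ‖U i (x, ρ)‖ₑ ∂ν ≤ D)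
    (hf : ∀ i, Measurable (f i)) (hC : ∀ i x, ‖f i x‖ ≤ C)
    (h_lim : ∀ᵐ ρ ∂σ, Tendsto (fun i => ∫ x, U i (x, ρ) * f i x ∂ν) l (𝓝 (L ρ))) :
    Tendsto (fun i => ∫ x, (∫ ρ, U i (x, ρ) ∂σ) * f i x ∂ν) l (𝓝 (∫ ρ, L ρ ∂σ)) := by
  have h_meas : ∀ i, Measurable fun q : X × R => U i q * f i q.1 := fun i =>
    (hU i).mul ((hf i).comp measurable_fst)
  have h_bound : ∀ i ρ, ‖∫ x, U i (x, ρ) * f i x ∂ν‖ ≤ (D * ENNReal.ofReal C).toReal := by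
    intro i ρ
    rw [← ENNReal.ofReal_le_iff_le_toReal (by finiteness), ofReal_norm]
    calc ‖∫ x, U i (x, ρ) * f i x ∂ν‖ₑ ≤ ∫⁻ x, ‖U i (x, ρ) * f i x‖ₑ ∂ν :=
          enorm_integral_le_lintegral_enorm _
      _ ≤ ∫⁻ x, ‖U i (x, ρ)‖ₑ * ENNReal.ofReal C ∂ν := by
          refine lintegral_mono fun x => ?_
          rw [enorm_mul, ← ofReal_norm (f i x)]
          gcongr
          exact hC i x
      _ ≤ D * ENNReal.ofReal C := by
          rw [lintegral_mul_const' _ _ ENNReal.ofReal_ne_top]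
          gcongr
          exact hU_le i ρ
  simp only [integral_integral_mul_eq_integral_integral
    (integrable_prod_of_forall_lintegral_enorm_le (hU _) hD (hU_le _)) (hf _) (hC _)]
  exact tendsto_integral_filter_of_dominated_convergence _
    (.of_forall fun i => ((h_meas i).stronglyMeasurable.integral_prod_left').aestronglyMeasurable)
    (.of_forall fun i => .of_forall (h_bound i)) (integrable_const _) h_lim

end Averaging

section TwoScale

variable {N : ℕ} {Ω : Type*} {T : (Fin N → ℝ) → Ω → Ω} {Q : Set (Fin N → ℝ)}
  {φ g : (Fin N → ℝ) → ℝ} {ψ : Ω → ℝ}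

/-- The oscillating test function `(x, ω) ↦ φ(x) ψ(T(x/ε)ω) g(x/ε²)` of stochastic two-scale
convergence at scale `ε`. -/
def oscTest (T : (Fin N → ℝ) → Ω → Ω) (φ : (Fin N → ℝ) → ℝ) (ψ : Ω → ℝ) (g : (Fin N → ℝ) → ℝ)
    (ε : ℝ) (p : (Fin N → ℝ) × Ω) : ℝ :=
  φ p.1 * ψ (T (ε⁻¹ • p.1) p.2) * g ((ε ^ 2)⁻¹ • p.1)

lemma norm_oscTest_le {Cφ Cψ Cg : ℝ} (hCφ : ∀ x, ‖φ x‖ ≤ Cφ) (hCψ : ∀ ω, ‖ψ ω‖ ≤ Cψ)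
    (hCg : ∀ y, ‖g y‖ ≤ Cg) (ε : ℝ) (p : (Fin N → ℝ) × Ω) :
    ‖oscTest T φ ψ g ε p‖ ≤ Cφ * Cψ * Cg :=
  norm_mul_le_of_le (norm_mul_le_of_le (hCφ _) (hCψ _)) (hCg _)

variable [MeasurableSpace Ω] {μ : Measure Ω}

lemma measurable_oscTest (hT : IsDynSys μ T) (hφ : Measurable φ) (hψ : Measurable ψ)
    (hg : Measurable g) (ε : ℝ) : Measurable (oscTest T φ ψ g ε) :=
  ((hφ.comp measurable_fst).mul (hT.measurable_comp_smul hψ _)).mul (by fun_prop)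

lemma integral_integral_eq_integral_mul_oscTest [SFinite μ] (hT : IsDynSys μ T)
    (hφ : Measurable φ) (hψ : Measurable ψ) (hg : Measurable g) {Cφ Cψ Cg : ℝ}
    (hCφ : ∀ x, ‖φ x‖ ≤ Cφ) (hCψ : ∀ ω, ‖ψ ω‖ ≤ Cψ) (hCg : ∀ y, ‖g y‖ ≤ Cg) (ε : ℝ)
    {u : (Fin N → ℝ) → Ω → ℝ}
    (hu : Integrable (fun p : (Fin N → ℝ) × Ω => u p.1 p.2) ((volume.restrict Q).prod μ)) :
    ∫ x in Q, (∫ ω, u x ω * φ x * ψ (T (ε⁻¹ • x) ω) * g ((ε ^ 2)⁻¹ • x) ∂μ) =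
      ∫ p, u p.1 p.2 * oscTest T φ ψ g ε p ∂(volume.restrict Q).prod μ := by
  have h_int := hu.mul_bdd (measurable_oscTest hT hφ hψ hg ε).aestronglyMeasurable
    (.of_forall (norm_oscTest_le hCφ hCψ hCg ε))
  rw [integral_prod _ h_int]
  simp only [oscTest, mul_assoc]

lemma integral_integral_integral_eq_integral_mul [SFinite μ]
    {u₀ : (Fin N → ℝ) → Ω → (Fin N → ℝ) → ℝ}
    (hu₀ : Integrable (fun q : ((Fin N → ℝ) × Ω) × (Fin N → ℝ) => u₀ q.1.1 q.1.2 q.2)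
      (((volume.restrict Q).prod μ).prod (volume.restrict (Ycube N))))
    (hφ : Measurable φ) (hψ : Measurable ψ) (hg : Measurable g) {Cφ Cψ Cg : ℝ}
    (hCφ : ∀ x, ‖φ x‖ ≤ Cφ) (hCψ : ∀ ω, ‖ψ ω‖ ≤ Cψ) (hCg : ∀ y, ‖g y‖ ≤ Cg) :
    ∫ x in Q, (∫ ω, (∫ y in Ycube N, u₀ x ω y * φ x * ψ ω * g y) ∂μ) =
      ∫ q, u₀ q.1.1 q.1.2 q.2 * (φ q.1.1 * ψ q.1.2 * g q.2)
        ∂((volume.restrict Q).prod μ).prod (volume.restrict (Ycube N)) := by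
  have h_int := hu₀.mul_bdd (g := fun q => φ q.1.1 * ψ q.1.2 * g q.2)
    (Measurable.aestronglyMeasurable (by fun_prop))
    (.of_forall fun q => norm_mul_le_of_le (norm_mul_le_of_le (hCφ _) (hCψ _)) (hCg _))
  rw [integral_prod _ h_int, integral_prod _ h_int.integral_prod_left]
  simp only [mul_assoc]

lemma integral_integral_translate_eq [SFinite μ] (hT : IsDynSys μ T)
    (hφ : Measurable φ) (hψ : Measurable ψ) (hg : Measurable g) {Cφ Cψ Cg : ℝ}
    (hCφ : ∀ x, ‖φ x‖ ≤ Cφ) (hCψ : ∀ ω, ‖ψ ω‖ ≤ Cψ) (hCg : ∀ y, ‖g y‖ ≤ Cg)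
    (hφ_zero : ∀ x ∉ Q, φ x = 0) {u : (Fin N → ℝ) → Ω → ℝ}
    (hu : Measurable fun p : (Fin N → ℝ) × Ω => u p.1 p.2) (hu_zero : ∀ x ∉ Q, ∀ ω, u x ω = 0)
    (hu_int : Integrable (fun p : (Fin N → ℝ) × Ω => u p.1 p.2) ((volume.restrict Q).prod μ))
    (ε : ℝ) (a : Fin N → ℝ) :
    ∫ x in Q, (∫ ω, u (x + a) ω * φ x * ψ (T (ε⁻¹ • x) ω) * g ((ε ^ 2)⁻¹ • x) ∂μ) =
      ∫ p, u p.1 p.2 * oscTest T φ ψ g ε (p.1 - a, p.2) ∂(volume.restrict Q).prod μ := by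
  rw [integral_integral_eq_integral_mul_oscTest hT hφ hψ hg hCφ hCψ hCg ε
    (integrable_restrict_prod_comp_add_right hu hu_zero hu_int a)]
  exact integral_restrict_prod_comp_add_right_mul (u := fun p => u p.1 p.2) hu_zero
    (fun x hx ω => by rw [oscTest, hφ_zero x hx, zero_mul, zero_mul]) a

lemma enorm_oscTest_sub_le (hT : IsDynSys μ T) {Cφ Cψ Cg : ℝ} (hCφ : ∀ x, ‖φ x‖ ≤ Cφ)
    (hCψ : ∀ ω, ‖ψ ω‖ ≤ Cψ) (hCg : ∀ y, ‖g y‖ ≤ Cg) {ε : ℝ} (hε : ε ≠ 0) (ρ : Fin N → ℝ)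
    (p : (Fin N → ℝ) × Ω) :
    ‖oscTest T φ ψ g ε (p.1 - ε ^ 2 • ρ, p.2) - oscTest T φ ψ (fun y => g (y - ρ)) ε p‖ₑ ≤
      ENNReal.ofReal (Cψ * Cg) * ‖φ (p.1 + -(ε ^ 2 • ρ)) - φ p.1‖ₑ +
      ENNReal.ofReal (Cφ * Cg) *
        ‖ψ (T (-(ε • ρ)) (T (ε⁻¹ • p.1) p.2)) - ψ (T (ε⁻¹ • p.1) p.2)‖ₑ := by
  have h_slow : ε⁻¹ • (p.1 - ε ^ 2 • ρ) = -(ε • ρ) + ε⁻¹ • p.1 := by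
    rw [smul_sub, smul_smul, pow_two, inv_mul_cancel_left₀ hε, sub_eq_neg_add]
  have h_fast : (ε ^ 2)⁻¹ • (p.1 - ε ^ 2 • ρ) = (ε ^ 2)⁻¹ • p.1 - ρ := by
    rw [smul_sub, inv_smul_smul₀ (pow_ne_zero 2 hε)]
  simp only [oscTest, h_slow, h_fast, hT.map_add, ← sub_eq_add_neg]
  set φ' := φ (p.1 - ε ^ 2 • ρ)
  set ω := T (ε⁻¹ • p.1) p.2
  set ω' := T (-(ε • ρ)) ω
  set y := (ε ^ 2)⁻¹ • p.1 - ρ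
  have h_split : φ' * ψ ω' * g y - φ p.1 * ψ ω * g y =
      ψ ω' * g y * (φ' - φ p.1) + φ p.1 * g y * (ψ ω' - ψ ω) := by ring
  rw [h_split]
  refine (enorm_add_le _ _).trans ?_
  rw [enorm_mul, enorm_mul (φ p.1 * g y), ← ofReal_norm (ψ ω' * g y), ← ofReal_norm (φ p.1 * g y)]
  gcongr
  · exact norm_mul_le_of_le (hCψ _) (hCg _)
  · exact norm_mul_le_of_le (hCφ _) (hCg _)

lemma lintegral_enorm_oscTest_sub_le [SFinite μ] (hT : IsDynSys μ T) (hφ : Measurable φ)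
    (hψ : Measurable ψ) {Cφ Cψ Cg : ℝ} (hCφ : ∀ x, ‖φ x‖ ≤ Cφ) (hCψ : ∀ ω, ‖ψ ω‖ ≤ Cψ)
    (hCg : ∀ y, ‖g y‖ ≤ Cg) {ε : ℝ} (hε : ε ≠ 0) (ρ : Fin N → ℝ) :
    ∫⁻ p, ‖oscTest T φ ψ g ε (p.1 - ε ^ 2 • ρ, p.2) - oscTest T φ ψ (fun y => g (y - ρ)) ε p‖ₑ
        ∂(volume.restrict Q).prod μ ≤
      ENNReal.ofReal (Cψ * Cg) * ((∫⁻ x, ‖φ (x + -(ε ^ 2 • ρ)) - φ x‖ₑ) * μ Set.univ) +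
      ENNReal.ofReal (Cφ * Cg) * ((∫⁻ ω, ‖ψ (T (-(ε • ρ)) ω) - ψ ω‖ₑ ∂μ) * volume Q) := by
  have hφ_meas : Measurable fun p : (Fin N → ℝ) × Ω =>
      ‖φ (p.1 + -(ε ^ 2 • ρ)) - φ p.1‖ₑ := by fun_prop
  have hψ_meas : Measurable fun ω => ‖ψ (T (-(ε • ρ)) ω) - ψ ω‖ₑ :=
    ((hψ.comp (hT.measurePreserving _).measurable).sub hψ).enorm
  have hψT_meas : Measurable fun p : (Fin N → ℝ) × Ω =>
      ‖ψ (T (-(ε • ρ)) (T (ε⁻¹ • p.1) p.2)) - ψ (T (ε⁻¹ • p.1) p.2)‖ₑ :=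
    hT.measurable_comp_smul hψ_meas ε⁻¹
  refine (lintegral_mono fun p => enorm_oscTest_sub_le hT hCφ hCψ hCg hε ρ p).trans ?_
  rw [lintegral_add_left (hφ_meas.const_mul _), lintegral_const_mul _ hφ_meas,
    lintegral_const_mul _ hψT_meas]
  gcongr
  · rw [lintegral_prod _ hφ_meas.aemeasurable]
    simp only [lintegral_const]
    rw [lintegral_mul_const _ (by fun_prop)]
    gcongr
    exact Measure.restrict_le_self
  · rw [lintegral_prod _ hψT_meas.aemeasurable, ← setLIntegral_const]
    exact lintegral_mono fun x => ((hT.measurePreserving (ε⁻¹ • x)).lintegral_comp hψ_meas).le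

lemma tendsto_lintegral_enorm_oscTest_sub [IsFiniteMeasure μ] (hT : IsDynSys μ T)
    (hQ : volume Q ≠ ⊤) (hφ : Continuous φ) (hφ_supp : HasCompactSupport φ) (hψ : Measurable ψ)
    {Cψ Cg : ℝ} (hCψ : ∀ ω, ‖ψ ω‖ ≤ Cψ) (hCg : ∀ y, ‖g y‖ ≤ Cg) {ι : Type*} {l : Filter ι}
    {ε : ι → ℝ} (hε : ∀ k, ε k ≠ 0) (hε0 : Tendsto ε l (𝓝 0)) (ρ : Fin N → ℝ) :
    Tendsto (fun k => ∫⁻ p, ‖oscTest T φ ψ g (ε k) (p.1 - ε k ^ 2 • ρ, p.2) -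
      oscTest T φ ψ (fun y => g (y - ρ)) (ε k) p‖ₑ ∂(volume.restrict Q).prod μ) l (𝓝 0) := by
  obtain ⟨Cφ, hCφ⟩ := hφ_supp.exists_bound_of_continuous hφ
  have h_fast : Tendsto (fun k => -(ε k ^ 2 • ρ)) l (𝓝 0) := by
    simpa using ((hε0.pow 2).smul_const ρ).neg
  have h_slow : Tendsto (fun k => -(ε k • ρ)) l (𝓝 0) := by
    simpa using (hε0.smul_const ρ).neg
  have hφ_lim := (tendsto_lintegral_enorm_comp_add_right_sub (ν := volume)
    (hφ.integrable_of_hasCompactSupport hφ_supp)).comp h_fast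
  have hψ_lim := (hT.tendsto_lintegral_enorm_comp_sub hψ hCψ).comp h_slow
  have h_bound := (ENNReal.Tendsto.const_mul (a := ENNReal.ofReal (Cψ * Cg))
      (ENNReal.Tendsto.mul_const hφ_lim (.inr (measure_ne_top μ Set.univ)))
      (.inr ENNReal.ofReal_ne_top)).add
    (ENNReal.Tendsto.const_mul (a := ENNReal.ofReal (Cφ * Cg))
      (ENNReal.Tendsto.mul_const hψ_lim (.inr hQ)) (.inr ENNReal.ofReal_ne_top))
  simp only [zero_mul, mul_zero, add_zero] at h_bound
  exact tendsto_of_tendsto_of_tendsto_of_le_of_le tendsto_const_nhds h_bound (fun _ => zero_le)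
    fun k => lintegral_enorm_oscTest_sub_le hT hφ.measurable hψ hCφ hCψ hCg (hε k) ρ

lemma integral_Ycube_translate_eq {u₀ : (Fin N → ℝ) → Ω → (Fin N → ℝ) → ℝ}
    (hu₀ : ∀ x ω, ZPeriodic (u₀ x ω)) (hg : ZPeriodic g) (ρ : Fin N → ℝ) :
    ∫ x in Q, (∫ ω, (∫ y in Ycube N, u₀ x ω (y + ρ) * φ x * ψ ω * g y) ∂μ) =
      ∫ x in Q, (∫ ω, (∫ y in Ycube N, u₀ x ω y * φ x * ψ ω * g (y - ρ)) ∂μ) := by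
  congr! 4 with x ω
  have h_per : ZPeriodic fun y => u₀ x ω y * φ x * ψ ω * g (y - ρ) := fun y k => by
    simp only [hu₀ x ω y k, hg.comp_sub_const ρ y k]
  simpa only [add_sub_cancel_right] using h_per.setIntegral_Ycube_comp_add_right ρ

namespace WeakStoch2Scale

variable {ε : ℕ → ℝ} {u : ℕ → (Fin N → ℝ) → Ω → ℝ} {u₀ : (Fin N → ℝ) → Ω → (Fin N → ℝ) → ℝ}

lemma translate [IsFiniteMeasure μ] (hT : IsDynSys μ T) (hQ : volume Q ≠ ⊤)
    (hε : ∀ k, ε k ≠ 0) (hε0 : Tendsto ε atTop (𝓝 0))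
    (hu : ∀ k, Measurable fun p : (Fin N → ℝ) × Ω => u k p.1 p.2)
    (hu_zero : ∀ k, ∀ x ∉ Q, ∀ ω, u k x ω = 0) {Φ : ℝ → ℝ} (hΦ : IsYoung Φ) {δ : ℝ} (hδ : 0 < δ)
    (hu_mod : ∀ k, orliczModular Φ ((volume.restrict Q).prod μ) δ (fun p => u k p.1 p.2) ≤ 1)
    (hu₀ : ∀ x ω, ZPeriodic (u₀ x ω)) (h : WeakStoch2Scale μ T Q ε u u₀) (ρ : Fin N → ℝ) :
    WeakStoch2Scale μ T Q ε (fun k x ω => u k (x + ε k ^ 2 • ρ) ω)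
      (fun x ω y => u₀ x ω (y + ρ)) := by
  intro φ hφ hφ_supp hφQ ψ hψ ⟨Cψ, hCψ⟩ g hg hg_per
  obtain ⟨Cφ, hCφ⟩ := hφ_supp.exists_bound_of_continuous hφ.continuous
  obtain ⟨Cg, hCg⟩ := hg_per.exists_norm_le hg
  have : IsFiniteMeasure (volume.restrict Q) := isFiniteMeasure_restrict.2 hQ
  have hφ_zero : ∀ x ∉ Q, φ x = 0 := fun x hx =>
    image_eq_zero_of_notMem_tsupport fun hx' => hx (hφQ hx')
  have hφ_meas : Measurable φ := hφ.continuous.measurable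
  have hg_sub_meas : Measurable fun y => g (y - ρ) := by fun_prop
  have hu_int := fun k => integrable_of_orliczModular_le_one hΦ hδ (hu k) (hu_mod k)
  have h_main := h φ hφ hφ_supp hφQ ψ hψ ⟨Cψ, hCψ⟩ (fun y => g (y - ρ)) (by fun_prop)
    (hg_per.comp_sub_const ρ)
  simp only [integral_integral_eq_integral_mul_oscTest hT hφ_meas hψ hg_sub_meas hCφ hCψ
    (fun y => hCg (y - ρ)) _ (hu_int _)] at h_main
  rw [integral_Ycube_translate_eq hu₀ hg_per]
  simp only [integral_integral_translate_eq hT hφ_meas hψ hg.measurable hCφ hCψ hCg hφ_zero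
    (hu _) (hu_zero _) (hu_int _)]
  exact tendsto_integral_mul_of_tendsto_lintegral_enorm_sub hΦ hδ hu hu_mod
    (fun k => measurable_oscTest hT hφ_meas hψ hg_sub_meas _)
    (fun k => (measurable_oscTest hT hφ_meas hψ hg.measurable _).comp (by fun_prop))
    (fun k => norm_oscTest_le hCφ hCψ (fun y => hCg (y - ρ)) _)
    (fun k p => norm_oscTest_le hCφ hCψ hCg _ _)
    (tendsto_lintegral_enorm_oscTest_sub hT hQ hφ.continuous hφ_supp hψ hCψ hCg hε hε0 ρ) h_main

lemma integral [SFinite μ] {R : Type*} [MeasurableSpace R] {σ : Measure R} [IsFiniteMeasure σ]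
    (hT : IsDynSys μ T) {U : ℕ → R → (Fin N → ℝ) → Ω → ℝ}
    {U₀ : R → (Fin N → ℝ) → Ω → (Fin N → ℝ) → ℝ} {D : ℝ≥0∞}
    (hU : ∀ k, Measurable fun q : ((Fin N → ℝ) × Ω) × R => U k q.2 q.1.1 q.1.2) (hD : D ≠ ⊤)
    (hU_le : ∀ k ρ, ∫⁻ p, ‖U k ρ p.1 p.2‖ₑ ∂(volume.restrict Q).prod μ ≤ D)
    (hU₀ : Integrable (fun q : (((Fin N → ℝ) × Ω) × (Fin N → ℝ)) × R =>
      U₀ q.2 q.1.1.1 q.1.1.2 q.1.2)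
      ((((volume.restrict Q).prod μ).prod (volume.restrict (Ycube N))).prod σ))
    (h : ∀ ρ, WeakStoch2Scale μ T Q ε (fun k => U k ρ) (U₀ ρ)) :
    WeakStoch2Scale μ T Q ε (fun k x ω => ∫ ρ, U k ρ x ω ∂σ)
      (fun x ω y => ∫ ρ, U₀ ρ x ω y ∂σ) := by
  intro φ hφ hφ_supp hφQ ψ hψ ⟨Cψ, hCψ⟩ g hg hg_per
  obtain ⟨Cφ, hCφ⟩ := hφ_supp.exists_bound_of_continuous hφ.continuous
  obtain ⟨Cg, hCg⟩ := hg_per.exists_norm_le hg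
  have hφ_meas : Measurable φ := hφ.continuous.measurable
  have hU_int : ∀ k, Integrable (fun q : ((Fin N → ℝ) × Ω) × R => U k q.2 q.1.1 q.1.2)
      (((volume.restrict Q).prod μ).prod σ) := fun k =>
    integrable_prod_of_forall_lintegral_enorm_le (hU k) hD (hU_le k)
  have hU_int_slice : ∀ k ρ, Integrable (fun p : (Fin N → ℝ) × Ω => U k ρ p.1 p.2)
      ((volume.restrict Q).prod μ) := fun k ρ =>
    ⟨((hU k).comp measurable_prodMk_right).aestronglyMeasurable,
      (hU_le k ρ).trans_lt hD.lt_top⟩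
  have h_pairing := fun k => integral_integral_eq_integral_mul_oscTest
    (u := fun x ω => ∫ ρ, U k ρ x ω ∂σ) hT hφ_meas hψ hg.measurable hCφ hCψ hCg (ε k)
    (hU_int k).integral_prod_left
  rw [integral_integral_integral_eq_integral_mul hU₀.integral_prod_left hφ_meas hψ hg.measurable
      hCφ hCψ hCg,
    integral_integral_mul_eq_integral_integral hU₀ (by fun_prop) fun q =>
      norm_mul_le_of_le (norm_mul_le_of_le (hCφ q.1.1) (hCψ q.1.2)) (hCg q.2)]
  simp only [h_pairing]
  refine tendsto_integral_integral_mul hU hD hU_le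
    (fun k => measurable_oscTest hT hφ_meas hψ hg.measurable _)
    (fun k => norm_oscTest_le hCφ hCψ hCg _) ?_
  filter_upwards [hU₀.prod_left_ae] with ρ hρ
  have h_lim := h ρ φ hφ hφ_supp hφQ ψ hψ ⟨Cψ, hCψ⟩ g hg hg_per
  rw [integral_integral_integral_eq_integral_mul hρ hφ_meas hψ hg.measurable hCφ hCψ hCg]
    at h_lim
  simpa only [integral_integral_eq_integral_mul_oscTest hT hφ_meas hψ hg.measurable hCφ hCψ hCg _
    (hU_int_slice _ ρ)] using h_lim

end WeakStoch2Scale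

lemma integrable_comp_add_of_zPeriodic {X : Type*} [MeasurableSpace X] {ν : Measure X} [SFinite ν]
    {σ : Measure (Fin N → ℝ)} [IsFiniteMeasure σ] {v : X → (Fin N → ℝ) → ℝ}
    (hv : Measurable fun q : X × (Fin N → ℝ) => v q.1 q.2) (hv_per : ∀ x, ZPeriodic (v x))
    (hv_int : Integrable (fun q : X × (Fin N → ℝ) => v q.1 q.2)
      (ν.prod (volume.restrict (Ycube N)))) :
    Integrable (fun q : (X × (Fin N → ℝ)) × (Fin N → ℝ) => v q.1.1 (q.1.2 + q.2))
      ((ν.prod (volume.restrict (Ycube N))).prod σ) := by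
  have hv_add : Measurable fun q : (X × (Fin N → ℝ)) × (Fin N → ℝ) => v q.1.1 (q.1.2 + q.2) :=
    hv.comp (f := fun q : (X × (Fin N → ℝ)) × (Fin N → ℝ) => (q.1.1, q.1.2 + q.2)) (by fun_prop)
  refine integrable_prod_of_forall_lintegral_enorm_le hv_add hv_int.2.ne fun ρ => le_of_eq ?_
  have hv_slice : Measurable fun q : X × (Fin N → ℝ) => v q.1 (q.2 + ρ) :=
    hv_add.comp measurable_prodMk_right
  rw [lintegral_prod _ hv_slice.enorm.aemeasurable, lintegral_prod _ hv.enorm.aemeasurable]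
  exact lintegral_congr fun x =>
    setLIntegral_Ycube_comp_add_right (f := fun y => ‖v x y‖ₑ) (fun y k => by rw [hv_per x y k]) ρ

end TwoScale

lemma volume_enorm2_lt_ne_top {N : ℕ} (r : ℝ) : volume {ρ : Fin N → ℝ | enorm2 ρ < r} ≠ ⊤ := by
  have h_norm_le : ∀ ρ : Fin N → ℝ, ‖ρ‖ ≤ enorm2 ρ := fun ρ =>
    (pi_norm_le_iff_of_nonneg (Real.sqrt_nonneg _)).2 fun i => Real.abs_le_sqrt <|
      Finset.single_le_sum (f := fun i => ρ i ^ 2) (fun i _ => sq_nonneg _) (Finset.mem_univ i)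
  have h_subset : {ρ : Fin N → ℝ | enorm2 ρ < r} ⊆ Metric.ball 0 r := fun ρ hρ =>
    mem_ball_zero_iff.2 ((h_norm_le ρ).trans_lt hρ)
  exact measure_ne_top_of_subset h_subset measure_ball_lt_top.ne

theorem stmt3_general {N : ℕ} {Ω : Type*} [MeasurableSpace Ω] (μ : Measure Ω) [IsFiniteMeasure μ]
    (Φ : ℝ → ℝ) (hΦ : IsYoung Φ) (T : (Fin N → ℝ) → Ω → Ω) (hT : IsDynSys μ T)
    (Q : Set (Fin N → ℝ)) (hQ : volume Q ≠ ⊤)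
    (ε : ℕ → ℝ) (hε : ∀ k, ε k ≠ 0) (hε0 : Tendsto ε atTop (𝓝 0))
    (u : ℕ → (Fin N → ℝ) → Ω → ℝ)
    (hu : ∀ k, Measurable fun p : (Fin N → ℝ) × Ω => u k p.1 p.2)
    (hu_zero : ∀ k, ∀ x ∉ Q, ∀ ω, u k x ω = 0)
    (hu_norm : (⨆ k, luxNorm Φ ((volume.restrict Q).prod μ) fun p => u k p.1 p.2) < ⊤)
    (u₀ : (Fin N → ℝ) → Ω → (Fin N → ℝ) → ℝ)
    (hu₀ : Measurable fun p : ((Fin N → ℝ) × Ω) × (Fin N → ℝ) => u₀ p.1.1 p.1.2 p.2)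
    (hu₀_per : ∀ x ω, ZPeriodic (u₀ x ω))
    (hu₀_norm : luxNorm Φ (((volume.restrict Q).prod μ).prod (volume.restrict (Ycube N)))
      (fun p => u₀ p.1.1 p.1.2 p.2) < ⊤)
    (hconv : WeakStoch2Scale μ T Q ε u u₀) (σ : Measure (Fin N → ℝ)) [IsFiniteMeasure σ] :
    (⨆ k, luxNorm Φ ((volume.restrict Q).prod μ)
        (fun p => ∫ ρ, u k (p.1 + ε k ^ 2 • ρ) p.2 ∂σ)) < ⊤ ∧
      WeakStoch2Scale μ T Q ε (fun k x ω => ∫ ρ, u k (x + ε k ^ 2 • ρ) ω ∂σ)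
        (fun x ω y => ∫ ρ, u₀ x ω (y + ρ) ∂σ) := by
  have : IsFiniteMeasure (volume.restrict Q) := isFiniteMeasure_restrict.2 hQ
  obtain ⟨δ, hδ, hu_mod⟩ := exists_forall_orliczModular_le_one hΦ hu_norm
  obtain ⟨δ₀, hδ₀, hu₀_mod⟩ :=
    exists_forall_orliczModular_le_one (ι := Unit) hΦ (iSup_const.trans_lt hu₀_norm)
  obtain ⟨D, hD, hD_le⟩ :=
    exists_forall_lintegral_enorm_le (ν := (volume.restrict Q).prod μ) hΦ hδ
  have hu₀_int := integrable_of_orliczModular_le_one hΦ hδ₀ hu₀ (hu₀_mod ())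
  refine ⟨(iSup_le fun k => luxNorm_integral_comp_add_right_le hΦ (hu k) (hu_zero k) hδ (hu_mod k)
    σ (measurable_id.const_smul (ε k ^ 2))).trans_lt ENNReal.ofReal_lt_top, ?_⟩
  refine WeakStoch2Scale.integral (U := fun k ρ x ω => u k (x + ε k ^ 2 • ρ) ω)
    (U₀ := fun ρ x ω y => u₀ x ω (y + ρ)) hT (fun k => ?_) hD (fun k ρ => ?_)
    (integrable_comp_add_of_zPeriodic (v := fun p : (Fin N → ℝ) × Ω => u₀ p.1 p.2) hu₀
      (fun p => hu₀_per p.1 p.2) hu₀_int)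
    (hconv.translate hT hQ hε hε0 hu hu_zero hΦ hδ hu_mod hu₀_per)
  · exact (hu k).comp (f := fun q : ((Fin N → ℝ) × Ω) × (Fin N → ℝ) =>
      (q.1.1 + ε k ^ 2 • q.2, q.1.2)) (by fun_prop)
  · exact (lintegral_restrict_prod_comp_add_right_le (F := fun p => ‖u k p.1 p.2‖ₑ)
      (fun x hx ω => by simp [hu_zero k x hx]) _).trans (hD_le _ (hu k) (hu_mod k))

/-- two-scale convergence of ball averages at scale `ε²`. -/
theorem stmt3 {N : ℕ} (hN : 1 ≤ N) {Ω : Type*} [MeasurableSpace Ω] (μ : Measure Ω)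
    [IsProbabilityMeasure μ] (hgen : CountGenModNull μ)
    (Φ : ℝ → ℝ) (hΦ : IsYoung Φ) (hΦ2 : Delta2 Φ) (hΦc2 : Delta2 (conjY Φ))
    (T : (Fin N → ℝ) → Ω → Ω) (hT : IsDynSys μ T)
    (Q : Set (Fin N → ℝ)) (hQo : IsOpen Q) (hQb : Bornology.IsBounded Q)
    (ε : ℕ → ℝ) (hε : ∀ k, ε k ∈ Set.Ioc (0 : ℝ) 1) (hε0 : Tendsto ε atTop (nhds 0))
    (u : ℕ → (Fin N → ℝ) → Ω → ℝ)
    (humeas : ∀ k, Measurable fun p : (Fin N → ℝ) × Ω => u k p.1 p.2)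
    (huzero : ∀ k, ∀ x ∉ Q, ∀ ω, u k x ω = 0)
    (hubd : (⨆ k, luxNorm Φ ((volume.restrict Q).prod μ) fun p => u k p.1 p.2) < ⊤)
    (u₀ : (Fin N → ℝ) → Ω → (Fin N → ℝ) → ℝ)
    (hu₀meas : Measurable fun p : ((Fin N → ℝ) × Ω) × (Fin N → ℝ) => u₀ p.1.1 p.1.2 p.2)
    (hu₀per : ∀ x ω, ZPeriodic (u₀ x ω))
    (hu₀bd : luxNorm Φ (((volume.restrict Q).prod μ).prod (volume.restrict (Ycube N)))
      (fun p => u₀ p.1.1 p.1.2 p.2) < ⊤)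
    (hconv : WeakStoch2Scale μ T Q ε u u₀)
    (r : ℝ) (hr : 0 < r) :
    (⨆ k, luxNorm Φ ((volume.restrict Q).prod μ)
        (fun p => ∫ ρ in {ρ : Fin N → ℝ | enorm2 ρ < r}, u k (p.1 + (ε k) ^ 2 • ρ) p.2)) < ⊤ ∧
      WeakStoch2Scale μ T Q ε
        (fun k x ω => ∫ ρ in {ρ : Fin N → ℝ | enorm2 ρ < r}, u k (x + (ε k) ^ 2 • ρ) ω)
        (fun x ω y => ∫ ρ in {ρ : Fin N → ℝ | enorm2 ρ < r}, u₀ x ω (y + ρ)) := by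
  have : IsFiniteMeasure (volume.restrict {ρ : Fin N → ℝ | enorm2 ρ < r}) :=
    isFiniteMeasure_restrict.2 (volume_enorm2_lt_ne_top r)
  exact stmt3_general μ Φ hΦ T hT Q hQb.measure_lt_top.ne ε (fun k => (hε k).1.ne') hε0 u humeas
    huzero hubd u₀ hu₀meas hu₀per hu₀bd hconv _
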